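/- arXiv:1811.12588 — 2 statements merged into one kernel-verified Lean document; each statement's English description precedes it below -/
import Mathlib

section
/- Let R be a rigid subcategory of C and X a two-term maximal R[1]-rigid subcategory of C. For any object R₀ ∈ R, if there exists a triangle M[-1] →f R₀ →g X →h M in C such that g : R₀ → X is a left X-approximation of R₀, then M ∈ X. -/
/-!
Setting: `C` is a Hom-finite Krull–Schmidt `k`-linear triangulated category over an
algebraically closed field `k` (Krull–Schmidt is encoded as Hom-finiteness together with
idempotent completeness). Subcategories are identified with their classes of objects and
are always assumed full, closed under isomorphisms, direct sums and direct summands.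
-/

open CategoryTheory CategoryTheory.Limits CategoryTheory.Pretriangulated Opposite

universe v u

variable {C : Type u} [Category.{v} C] [Preadditive C] [HasZeroObject C] [HasShift C ℤ]
  [∀ n : ℤ, (shiftFunctor C n).Additive] [Pretriangulated C]

/-- `Y` is a direct summand (retract) of `X`. -/
def IsRetractOf {D : Type*} [Category D] (Y X : D) : Prop :=
  ∃ (s : Y ⟶ X) (r : X ⟶ Y), s ≫ r = 𝟙 Y

/-- `S` is a direct sum (biproduct) of `F` and `G`. -/
def IsDirectSumOf {D : Type*} [Category D] [Preadditive D] (S F G : D) : Prop :=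
  ∃ (i : F ⟶ S) (j : G ⟶ S) (p : S ⟶ F) (q : S ⟶ G),
    i ≫ p = 𝟙 F ∧ j ≫ q = 𝟙 G ∧ i ≫ q = 0 ∧ j ≫ p = 0 ∧ p ≫ i + q ≫ j = 𝟙 S

/-- A subcategory of an additive category, identified with its class of objects:
closed under isomorphisms, finite direct sums and direct summands. -/
def IsSubcat {D : Type*} [Category D] [Preadditive D] (S : Set D) : Prop :=
  (∀ ⦃X Y : D⦄, (X ≅ Y) → X ∈ S → Y ∈ S) ∧
  (∀ ⦃F G T : D⦄, F ∈ S → G ∈ S → IsDirectSumOf T F G → T ∈ S) ∧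
  (∀ ⦃X Y : D⦄, X ∈ S → IsRetractOf Y X → Y ∈ S)

/-- `f : X ⟶ A` is a right `𝓧`-approximation of `A`:
every map `X' ⟶ A` with `X' ∈ 𝓧` factors through `f`. -/
def IsRightApprox {D : Type*} [Category D] (𝓧 : Set D) {X A : D} (f : X ⟶ A) : Prop :=
  ∀ X' ∈ 𝓧, ∀ g : X' ⟶ A, ∃ h : X' ⟶ X, h ≫ f = g

/-- `f : A ⟶ X` is a left `𝓧`-approximation of `A`:
every map `A ⟶ X'` with `X' ∈ 𝓧` factors through `f`. -/
def IsLeftApprox {D : Type*} [Category D] (𝓧 : Set D) {A X : D} (f : A ⟶ X) : Prop :=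
  ∀ X' ∈ 𝓧, ∀ g : A ⟶ X', ∃ h : X ⟶ X', f ≫ h = g

/-- `𝓧` is contravariantly finite: every object admits a right `𝓧`-approximation. -/
def ContravariantlyFinite {D : Type*} [Category D] (𝓧 : Set D) : Prop :=
  ∀ A : D, ∃ X ∈ 𝓧, ∃ f : X ⟶ A, IsRightApprox 𝓧 f

/-- `𝓧` is covariantly finite: every object admits a left `𝓧`-approximation. -/
def CovariantlyFinite {D : Type*} [Category D] (𝓧 : Set D) : Prop :=
  ∀ A : D, ∃ X ∈ 𝓧, ∃ f : A ⟶ X, IsLeftApprox 𝓧 f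

/-- `𝓧` is functorially finite. -/
def FunctoriallyFinite {D : Type*} [Category D] (𝓧 : Set D) : Prop :=
  ContravariantlyFinite 𝓧 ∧ CovariantlyFinite 𝓧

/-- `𝓧 ∨ add M`: the smallest subcategory containing `𝓧` and `M`. -/
def veeAdd {D : Type*} [Category D] [Preadditive D] (𝓧 : Set D) (M : D) : Set D :=
  ⋂₀ {T : Set D | IsSubcat T ∧ 𝓧 ⊆ T ∧ M ∈ T}

/-- The shift `𝓢⟦n⟧` of a subcategory (closed under isomorphism). -/
def shiftSet (𝓢 : Set C) (n : ℤ) : Set C := {Y | ∃ X ∈ 𝓢, Nonempty (Y ≅ X⟦n⟧)}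

/-- `𝓐 ∗ 𝓑`: the class of objects `M` admitting a distinguished triangle
`A → M → B → A⟦1⟧` with `A ∈ 𝓐` and `B ∈ 𝓑`. -/
def starSet (𝓐 𝓑 : Set C) : Set C :=
  {M | ∃ A ∈ 𝓐, ∃ B ∈ 𝓑, ∃ (f : A ⟶ M) (g : M ⟶ B) (h : B ⟶ A⟦(1:ℤ)⟧),
    Triangle.mk f g h ∈ distTriang C}

/-- `𝓡 ∗ 𝓡[1]`, the class of two-term objects with respect to `𝓡`. -/
def twoTerm (𝓡 : Set C) : Set C := starSet 𝓡 (shiftSet 𝓡 1)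

/-- `𝓡` is rigid: `Hom(R, R'[1]) = 0` for all `R, R' ∈ 𝓡`. -/
def IsRigidSubcat (𝓡 : Set C) : Prop :=
  ∀ R ∈ 𝓡, ∀ R' ∈ 𝓡, ∀ φ : R ⟶ R'⟦(1:ℤ)⟧, φ = 0

/-- `φ` lies in the ideal `[𝓡[1]]` of morphisms factoring through an object of `𝓡⟦1⟧`. -/
def InShiftIdeal (𝓡 : Set C) {A B : C} (φ : A ⟶ B) : Prop :=
  ∃ R ∈ 𝓡, ∃ (a : A ⟶ R⟦(1:ℤ)⟧) (b : R⟦(1:ℤ)⟧ ⟶ B), φ = a ≫ b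

/-- `𝓧` is `𝓡[1]`-rigid: `[𝓡[1]](𝓧, 𝓧[1]) = 0`. -/
def IsRelRigid (𝓡 𝓧 : Set C) : Prop :=
  ∀ X ∈ 𝓧, ∀ X' ∈ 𝓧, ∀ φ : X ⟶ X'⟦(1:ℤ)⟧, InShiftIdeal 𝓡 φ → φ = 0

/-- `[𝓡[1]](M, 𝓧[1]) = 0`. -/
def relOrthTo (𝓡 𝓧 : Set C) (M : C) : Prop :=
  ∀ X ∈ 𝓧, ∀ φ : M ⟶ X⟦(1:ℤ)⟧, InShiftIdeal 𝓡 φ → φ = 0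

/-- `[𝓡[1]](𝓧, M[1]) = 0`. -/
def relOrthFrom (𝓡 𝓧 : Set C) (M : C) : Prop :=
  ∀ X ∈ 𝓧, ∀ φ : X ⟶ M⟦(1:ℤ)⟧, InShiftIdeal 𝓡 φ → φ = 0

/-- `𝓧 ⊆ 𝓡 ∗ 𝓡[1]` is two-term maximal `𝓡[1]`-rigid: it is `𝓡[1]`-rigid and for every
`M ∈ 𝓡 ∗ 𝓡[1]`, `[𝓡[1]](𝓧 ∨ add M, (𝓧 ∨ add M)[1]) = 0` implies `M ∈ 𝓧`. -/
def IsTwoTermMaxRelRigid (𝓡 𝓧 : Set C) : Prop :=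
  𝓧 ⊆ twoTerm 𝓡 ∧ IsRelRigid 𝓡 𝓧 ∧
  ∀ M ∈ twoTerm 𝓡, IsRelRigid 𝓡 (veeAdd 𝓧 M) → M ∈ 𝓧

/-- `𝓧 ⊆ 𝓡 ∗ 𝓡[1]` is two-term weak `𝓡[1]`-cluster tilting: `𝓡 ⊆ 𝓧[-1] ∗ 𝓧` and
`𝓧 = {M ∈ 𝓡 ∗ 𝓡[1] : [𝓡[1]](M, 𝓧[1]) = 0 and [𝓡[1]](𝓧, M[1]) = 0}`. -/
def IsTwoTermWeakRelCT (𝓡 𝓧 : Set C) : Prop :=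
  𝓧 ⊆ twoTerm 𝓡 ∧
  (∀ R ∈ 𝓡, R ∈ starSet (shiftSet 𝓧 (-1)) 𝓧) ∧
  (∀ M : C, M ∈ 𝓧 ↔ M ∈ twoTerm 𝓡 ∧ relOrthTo 𝓡 𝓧 M ∧ relOrthFrom 𝓡 𝓧 M)

/-- `𝓧 ⊆ 𝓡 ∗ 𝓡[1]` is two-term `𝓡[1]`-cluster tilting: `𝓧` is contravariantly finite and
`𝓧 = {M ∈ 𝓡 ∗ 𝓡[1] : [𝓡[1]](M, 𝓧[1]) = 0 and [𝓡[1]](𝓧, M[1]) = 0}`. -/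
def IsTwoTermRelCT (𝓡 𝓧 : Set C) : Prop :=
  𝓧 ⊆ twoTerm 𝓡 ∧ ContravariantlyFinite 𝓧 ∧
  (∀ M : C, M ∈ 𝓧 ↔ M ∈ twoTerm 𝓡 ∧ relOrthTo 𝓡 𝓧 M ∧ relOrthFrom 𝓡 𝓧 M)

/-!
Relative rigidity of `𝓧 ∪ {M}` is a diagram chase: a morphism `M ⟶ X'⟦1⟧` in the ideal vanishes on
`X`, so it comes from `R₀⟦1⟧`, hence from `X⟦1⟧` by the approximation property, where it dies; and
a morphism `R⟦1⟧ ⟶ M⟦1⟧` lifts to `X⟦1⟧` by rigidity.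

To see that `M` is two-term, take triangles `R₂ ⟶ R₁ ⟶ X ⟶ R₂⟦1⟧` and
`N ⟶ R₁ ⟶ M ⟶ N⟦1⟧`, the map `R₁ ⟶ M` being the composite through `X`. The octahedral axiom
would give `N ≅ R₂ ⊞ R₀`, but is not available. It is enough that `N` is a direct summand of an
object of `𝓡`. Now `N` is a weak pullback of `R₁ ⟶ X ⟵ R₀`, which provides maps `R₂ ⟶ N` and
`R₀ ⟶ N`; subtracting from `𝟙 N` an endomorphism factoring through `R₂ ⊞ R₀` leaves one killed by
both projections of the weak pullback, and comparing the triangles on `R₁ ⟶ X` and `R₁ ⟶ M` shows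
that such an endomorphism factors through `R₂`.
-/

namespace IsSubcat

variable {D : Type*} [Category D] [Preadditive D] {S : Set D}

lemma biprod_mem (hS : IsSubcat S) {P Q : D} [HasBinaryBiproduct P Q] (hP : P ∈ S) (hQ : Q ∈ S) :
    (P ⊞ Q) ∈ S :=
  hS.2.1 hP hQ ⟨biprod.inl, biprod.inr, biprod.fst, biprod.snd, by simp, by simp, by simp,
    by simp, by simp⟩

lemma mem_of_id_eq_add (hS : IsSubcat S) {N P Q : D} [HasBinaryBiproduct P Q] (hP : P ∈ S)
    (hQ : Q ∈ S) {f : N ⟶ P} {f' : P ⟶ N} {g : N ⟶ Q} {g' : Q ⟶ N}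
    (h : 𝟙 N = f ≫ f' + g ≫ g') : N ∈ S :=
  hS.2.2 (hS.biprod_mem hP hQ) ⟨biprod.lift f g, biprod.desc f' g', by rw [biprod.lift_desc, h]⟩

end IsSubcat

lemma veeAdd_subset {D : Type*} [Category D] [Preadditive D] {𝓣 𝓢 : Set D} {M : D}
    (h𝓣 : IsSubcat 𝓣) (h : insert M 𝓢 ⊆ 𝓣) : veeAdd 𝓢 M ⊆ 𝓣 :=
  Set.sInter_subset_of_mem ⟨h𝓣, (Set.subset_insert M 𝓢).trans h, h (Set.mem_insert M 𝓢)⟩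

section Triangles

lemma distTriang_of_iso₃ {A B D D' : C} {f : A ⟶ B} {g : B ⟶ D} {h : D ⟶ A⟦(1 : ℤ)⟧}
    (hT : Triangle.mk f g h ∈ distTriang C) (e : D ≅ D') :
    Triangle.mk f (g ≫ e.hom) (e.inv ≫ h) ∈ distTriang C :=
  isomorphic_distinguished _ hT _ <|
    Triangle.isoMk _ _ (Iso.refl A) (Iso.refl B) e.symm
      (show f ≫ 𝟙 B = 𝟙 A ≫ f by simp)
      (show (g ≫ e.hom) ≫ e.inv = 𝟙 B ≫ g by simp)
      (show (e.inv ≫ h) ≫ (𝟙 A)⟦1⟧' = e.inv ≫ h by simp)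

variable {R₂ R₁ R₀ X M N : C}
  {a : R₂ ⟶ R₁} {i : R₁ ⟶ X} {c : X ⟶ R₂⟦(1 : ℤ)⟧}
  {g : R₀ ⟶ X} {p : X ⟶ M} {q : M ⟶ R₀⟦(1 : ℤ)⟧}
  {n : N ⟶ R₁} {m : M ⟶ N⟦(1 : ℤ)⟧} {z : N ⟶ R₀}

lemma exists_weakPullback_lift (hX : Triangle.mk g p q ∈ distTriang C)
    (hN : Triangle.mk n (i ≫ p) m ∈ distTriang C) (hnz : n ≫ i = z ≫ g) (hmz : m ≫ z⟦1⟧' = q)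
    {P : C} (s : P ⟶ R₁) (t : P ⟶ R₀) (hst : s ≫ i = t ≫ g) :
    ∃ r : P ⟶ N, r ≫ n = s ∧ r ≫ z = t := by
  have hgp : g ≫ p = 0 := comp_distTriang_mor_zero₁₂ _ hX
  have hmn : m ≫ n⟦1⟧' = 0 := comp_distTriang_mor_zero₃₁ _ hN
  obtain ⟨r : P ⟶ N, hr : s = r ≫ n⟩ := Triangle.coyoneda_exact₂ _ hN s
    (show s ≫ i ≫ p = 0 by rw [reassoc_of% hst, hgp, comp_zero])
  -- `r ≫ z - t` is killed by `g`, so `r` can be corrected by a map factoring through `M⟦-1⟧`.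
  obtain ⟨κ : P⟦(1 : ℤ)⟧ ⟶ M, hκ : (r ≫ z - t)⟦1⟧' = κ ≫ q⟩ :=
    Triangle.coyoneda_exact₁ _ hX ((r ≫ z - t)⟦1⟧') (show (r ≫ z - t)⟦1⟧' ≫ g⟦1⟧' = 0 by
      rw [← Functor.map_comp, Preadditive.sub_comp, Category.assoc, ← hnz, ← hst, hr,
        Category.assoc, sub_self, Functor.map_zero])
  obtain ⟨r', hr'⟩ := (shiftFunctor C (1 : ℤ)).map_surjective (κ ≫ m)
  have hr'n : r' ≫ n = 0 := (shiftFunctor C (1 : ℤ)).map_injective <| by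
    rw [Functor.map_comp, hr', Category.assoc, hmn, comp_zero, Functor.map_zero]
  have hr'z : r' ≫ z = r ≫ z - t := (shiftFunctor C (1 : ℤ)).map_injective <| by
    rw [Functor.map_comp, hr', Category.assoc, hmz, hκ]
  exact ⟨r - r', by rw [Preadditive.sub_comp, hr'n, sub_zero, hr],
    by rw [Preadditive.sub_comp, hr'z, sub_sub_cancel]⟩

lemma exists_factor_of_comp_eq_zero (hX : Triangle.mk g p q ∈ distTriang C)
    (hN : Triangle.mk n (i ≫ p) m ∈ distTriang C) (hmz : m ≫ z⟦1⟧' = q)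
    {y : R₂ ⟶ N} (hy : c ≫ y⟦1⟧' = p ≫ m)
    {P : C} (e : P ⟶ N) (hen : e ≫ n = 0) (hez : e ≫ z = 0) : ∃ w : P ⟶ R₂, w ≫ y = e := by
  obtain ⟨x : P⟦(1 : ℤ)⟧ ⟶ M, hx : e⟦1⟧' = x ≫ m⟩ := Triangle.coyoneda_exact₁ _ hN (e⟦1⟧')
    (show e⟦1⟧' ≫ n⟦1⟧' = 0 by rw [← Functor.map_comp, hen, Functor.map_zero])
  obtain ⟨x' : P⟦(1 : ℤ)⟧ ⟶ X, rfl : x = x' ≫ p⟩ := Triangle.coyoneda_exact₃ _ hX x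
    (show x ≫ q = 0 by
      rw [← hmz, ← Category.assoc, ← hx, ← Functor.map_comp, hez, Functor.map_zero])
  obtain ⟨w, hw⟩ := (shiftFunctor C (1 : ℤ)).map_surjective (x' ≫ c)
  exact ⟨w, (shiftFunctor C (1 : ℤ)).map_injective <| by
    rw [Functor.map_comp, hw, Category.assoc, hy, hx, Category.assoc]⟩

lemma IsSubcat.mem_of_distTriang_comp {S : Set C} (hS : IsSubcat S)
    (hR₂ : R₂ ∈ S) (hR₀ : R₀ ∈ S)
    (hR : Triangle.mk a i c ∈ distTriang C) (hX : Triangle.mk g p q ∈ distTriang C)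
    (hN : Triangle.mk n (i ≫ p) m ∈ distTriang C) {u : R₀ ⟶ R₁} (hu : u ≫ i = g) : N ∈ S := by
  have hai : a ≫ i = 0 := comp_distTriang_mor_zero₁₂ _ hR
  obtain ⟨z : N ⟶ R₀, hnz : n ≫ i = z ≫ g, hmz : m ≫ z⟦1⟧' = 𝟙 M ≫ q⟩ :=
    complete_distinguished_triangle_morphism₁ _ _ hN hX i (𝟙 M) (Category.comp_id _)
  rw [Category.id_comp] at hmz
  obtain ⟨y : R₂ ⟶ N, -, hy : c ≫ y⟦1⟧' = p ≫ m⟩ :=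
    complete_distinguished_triangle_morphism₁ _ _ hR hN (𝟙 R₁) p (Category.id_comp _).symm
  obtain ⟨r₀, hr₀n, hr₀z⟩ := exists_weakPullback_lift hX hN hnz hmz u (𝟙 R₀)
    (by rw [hu, Category.id_comp])
  obtain ⟨r₂, hr₂n, hr₂z⟩ := exists_weakPullback_lift hX hN hnz hmz a 0
    (by rw [hai, zero_comp])
  obtain ⟨v : N ⟶ R₂, hv : n - z ≫ u = v ≫ a⟩ := Triangle.coyoneda_exact₂ _ hR (n - z ≫ u)
    (show (n - z ≫ u) ≫ i = 0 by
      rw [Preadditive.sub_comp, hnz, Category.assoc, hu, sub_self])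
  obtain ⟨w, hw⟩ := exists_factor_of_comp_eq_zero hX hN hmz hy (𝟙 N - (v ≫ r₂ + z ≫ r₀))
    (by simp [hr₂n, hr₀n, ← hv]) (by simp [hr₂z, hr₀z])
  refine hS.mem_of_id_eq_add (hS.biprod_mem hR₂ hR₀) hR₂
    (f := biprod.lift v z) (f' := biprod.desc r₂ r₀) (g := w) (g' := y) ?_
  rw [biprod.lift_desc, hw, add_sub_cancel]

end Triangles

section TwoTerm

variable {𝓡 : Set C} {R₀ X M : C} {g : R₀ ⟶ X} {p : X ⟶ M} {q : M ⟶ R₀⟦(1 : ℤ)⟧}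

lemma mem_twoTerm_iff : M ∈ twoTerm 𝓡 ↔ ∃ R₁ ∈ 𝓡, ∃ R₂ ∈ 𝓡,
    ∃ (a : R₂ ⟶ R₁) (i : R₁ ⟶ M) (c : M ⟶ R₂⟦(1 : ℤ)⟧), Triangle.mk a i c ∈ distTriang C := by
  constructor
  · rintro ⟨R₁, hR₁, B, ⟨R₂, hR₂, ⟨e⟩⟩, i, b, d, hT⟩
    obtain ⟨a, ha⟩ := (shiftFunctor C (1 : ℤ)).map_surjective (-(e.inv ≫ d))
    refine ⟨R₁, hR₁, R₂, hR₂, a, i, b ≫ e.hom, ?_⟩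
    rw [Pretriangulated.rotate_distinguished_triangle]
    change Triangle.mk i (b ≫ e.hom) (-a⟦1⟧') ∈ distTriang C
    rw [ha, neg_neg]
    exact distTriang_of_iso₃ hT e
  · rintro ⟨R₁, hR₁, R₂, hR₂, a, i, c, hT⟩
    exact ⟨R₁, hR₁, R₂⟦(1 : ℤ)⟧, ⟨R₂, hR₂, ⟨Iso.refl _⟩⟩, i, c, _, rot_of_distTriang _ hT⟩

lemma mem_twoTerm_of_distTriang (h𝓡sub : IsSubcat 𝓡) (h𝓡 : IsRigidSubcat 𝓡) (hR₀ : R₀ ∈ 𝓡)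
    (hX : X ∈ twoTerm 𝓡) (hT : Triangle.mk g p q ∈ distTriang C) : M ∈ twoTerm 𝓡 := by
  obtain ⟨R₁, hR₁, R₂, hR₂, a, i, c, hR⟩ := mem_twoTerm_iff.1 hX
  obtain ⟨u : R₀ ⟶ R₁, hu : g = u ≫ i⟩ := Triangle.coyoneda_exact₃ _ hR g (h𝓡 R₀ hR₀ R₂ hR₂ _)
  obtain ⟨N, n, m, hN⟩ := distinguished_cocone_triangle₁ (i ≫ p)
  exact mem_twoTerm_iff.2 ⟨R₁, hR₁, N, h𝓡sub.mem_of_distTriang_comp hR₂ hR₀ hR hT hN hu.symm,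
    n, i ≫ p, m, hN⟩

end TwoTerm

section RelativeRigidity

variable {D : Type*} [Category D] [HasShift D ℤ] {𝓡 : Set D}

namespace InShiftIdeal

variable {A B E : D} {φ : A ⟶ B}

lemma precomp (h : InShiftIdeal 𝓡 φ) (x : E ⟶ A) : InShiftIdeal 𝓡 (x ≫ φ) := by
  obtain ⟨R, hR, a, b, rfl⟩ := h
  exact ⟨R, hR, x ≫ a, b, (Category.assoc _ _ _).symm⟩

lemma postcomp (h : InShiftIdeal 𝓡 φ) (x : B ⟶ E) : InShiftIdeal 𝓡 (φ ≫ x) := by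
  obtain ⟨R, hR, a, b, rfl⟩ := h
  exact ⟨R, hR, a, b ≫ x, Category.assoc _ _ _⟩

end InShiftIdeal

variable [Preadditive D]

lemma isSubcat_setOf_relOrthTo (𝓡 𝓨 : Set D) : IsSubcat {A | relOrthTo 𝓡 𝓨 A} := by
  refine ⟨fun A A' e hA B hB φ hφ ↦ ?_, ?_, ?_⟩
  · rw [← cancel_epi e.hom, hA B hB _ (hφ.precomp e.hom), comp_zero]
  · rintro F G T hF hG ⟨i, j, p, q, -, -, -, -, htot⟩ B hB φ hφ
    rw [← Category.id_comp φ, ← htot, Preadditive.add_comp, Category.assoc, Category.assoc,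
      hF B hB _ (hφ.precomp i), hG B hB _ (hφ.precomp j), comp_zero, comp_zero, add_zero]
  · rintro A A' hA ⟨s, r, hsr⟩ B hB φ hφ
    rw [← Category.id_comp φ, ← hsr, Category.assoc, hA B hB _ (hφ.precomp r), comp_zero]

lemma isSubcat_setOf_relOrthFrom [(shiftFunctor D (1 : ℤ)).Additive] (𝓡 𝓨 : Set D) :
    IsSubcat {B | relOrthFrom 𝓡 𝓨 B} := by
  refine ⟨fun B B' e hB A hA φ hφ ↦ ?_, ?_, ?_⟩
  · rw [← cancel_mono (e.inv⟦1⟧'), hB A hA _ (hφ.postcomp (e.inv⟦1⟧')), zero_comp]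
  · rintro F G T hF hG ⟨i, j, p, q, -, -, -, -, htot⟩ A hA φ hφ
    rw [← Category.comp_id φ, ← CategoryTheory.Functor.map_id, ← htot, Functor.map_add,
      Functor.map_comp, Functor.map_comp, Preadditive.comp_add, ← Category.assoc, ← Category.assoc,
      hF A hA _ (hφ.postcomp _), hG A hA _ (hφ.postcomp _), zero_comp, zero_comp, add_zero]
  · rintro B B' hB ⟨s, r, hsr⟩ A hA φ hφ
    rw [← Category.comp_id φ, ← CategoryTheory.Functor.map_id, ← hsr, Functor.map_comp,
      ← Category.assoc, hB A hA _ (hφ.postcomp _), zero_comp]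

namespace IsRelRigid

variable {𝓧 : Set D} {M : D}

lemma insert_of_relOrth (h𝓧 : IsRelRigid 𝓡 𝓧) (hto : relOrthTo 𝓡 𝓧 M)
    (hfrom : relOrthFrom 𝓡 (insert M 𝓧) M) : IsRelRigid 𝓡 (insert M 𝓧) := by
  rintro Y hY Y' (rfl | hY')
  · exact hfrom Y hY
  · obtain rfl | hY := hY
    · exact hto Y' hY'
    · exact h𝓧 Y hY Y' hY'

lemma veeAdd_of_insert [(shiftFunctor D (1 : ℤ)).Additive] (h : IsRelRigid 𝓡 (insert M 𝓧)) :
    IsRelRigid 𝓡 (veeAdd 𝓧 M) := by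
  have hto : veeAdd 𝓧 M ⊆ {A | relOrthTo 𝓡 (insert M 𝓧) A} :=
    veeAdd_subset (isSubcat_setOf_relOrthTo 𝓡 _) h
  have hfrom : veeAdd 𝓧 M ⊆ {B | relOrthFrom 𝓡 (veeAdd 𝓧 M) B} :=
    veeAdd_subset (isSubcat_setOf_relOrthFrom 𝓡 _) fun B hB A hA ↦ hto hA B hB
  exact fun A hA B hB ↦ hfrom hB A hA

end IsRelRigid

end RelativeRigidity

section RelativeRigidityOfTriangle

variable {𝓡 𝓧 𝓨 : Set C} {R₀ X M : C} {g : R₀ ⟶ X} {p : X ⟶ M} {q : M ⟶ R₀⟦(1 : ℤ)⟧}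

lemma relOrthTo_of_distTriang (hT : Triangle.mk g p q ∈ distTriang C) (hg : IsLeftApprox 𝓧 g)
    (hX : relOrthTo 𝓡 𝓧 X) : relOrthTo 𝓡 𝓧 M := by
  intro X' hX' φ hφ
  have hqg : q ≫ g⟦1⟧' = 0 := comp_distTriang_mor_zero₃₁ _ hT
  obtain ⟨ψ : R₀⟦(1 : ℤ)⟧ ⟶ X'⟦(1 : ℤ)⟧, rfl : φ = q ≫ ψ⟩ :=
    Triangle.yoneda_exact₃ _ hT φ (hX X' hX' _ (hφ.precomp p))
  obtain ⟨y, rfl⟩ := (shiftFunctor C (1 : ℤ)).map_surjective ψ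
  obtain ⟨y', rfl⟩ := hg X' hX' y
  rw [Functor.map_comp, reassoc_of% hqg, zero_comp]

lemma relOrthFrom_of_distTriang (hT : Triangle.mk g p q ∈ distTriang C)
    (hR₀ : ∀ R ∈ 𝓡, ∀ φ : R ⟶ R₀⟦(1 : ℤ)⟧, φ = 0) (hX : relOrthFrom 𝓡 𝓨 X) :
    relOrthFrom 𝓡 𝓨 M := by
  rintro Y hY _ ⟨R, hR, x, ψ, rfl⟩
  obtain ⟨y, rfl⟩ := (shiftFunctor C (1 : ℤ)).map_surjective ψ
  obtain ⟨y' : R ⟶ X, rfl : y = y' ≫ p⟩ := Triangle.coyoneda_exact₃ _ hT y (hR₀ R hR _)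
  rw [Functor.map_comp, ← Category.assoc, hX Y hY _ ⟨R, hR, x, y'⟦1⟧', rfl⟩, zero_comp]

lemma IsRelRigid.insert_of_distTriang (h𝓧 : IsRelRigid 𝓡 𝓧) (hX : X ∈ 𝓧)
    (hT : Triangle.mk g p q ∈ distTriang C) (hg : IsLeftApprox 𝓧 g)
    (hR₀ : ∀ R ∈ 𝓡, ∀ φ : R ⟶ R₀⟦(1 : ℤ)⟧, φ = 0) : IsRelRigid 𝓡 (insert M 𝓧) := by
  have hto : relOrthTo 𝓡 𝓧 M := relOrthTo_of_distTriang hT hg (h𝓧 X hX)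
  refine h𝓧.insert_of_relOrth hto (relOrthFrom_of_distTriang hT hR₀ ?_)
  rintro Y (rfl | hY)
  · exact hto X hX
  · exact h𝓧 Y hY X hX

end RelativeRigidityOfTriangle

theorem mem_of_triangle_leftApprox_general
    (𝓡 𝓧 : Set C) (h𝓡sub : IsSubcat 𝓡) (h𝓡 : IsRigidSubcat 𝓡)
    (h𝓧max : IsTwoTermMaxRelRigid 𝓡 𝓧)
    (R₀ : C) (hR₀ : R₀ ∈ 𝓡) (M X : C) (hX : X ∈ 𝓧)
    (f : M⟦(-1 : ℤ)⟧ ⟶ R₀) (g : R₀ ⟶ X) (h : X ⟶ M⟦(-1 : ℤ)⟧⟦(1 : ℤ)⟧)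
    (htri : Triangle.mk f g h ∈ distTriang C)
    (happrox : IsLeftApprox 𝓧 g) :
    M ∈ 𝓧 := by
  obtain ⟨htwo, hrig, hmax⟩ := h𝓧max
  obtain ⟨p, q, hT⟩ : ∃ (p : X ⟶ M) (q : M ⟶ R₀⟦(1 : ℤ)⟧), Triangle.mk g p q ∈ distTriang C :=
    ⟨_, _, distTriang_of_iso₃ (rot_of_distTriang _ htri) (shiftNegShift M (1 : ℤ))⟩
  have hinsert : IsRelRigid 𝓡 (insert M 𝓧) :=
    hrig.insert_of_distTriang hX hT happrox fun R hR ↦ h𝓡 R hR R₀ hR₀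
  exact hmax M (mem_twoTerm_of_distTriang h𝓡sub h𝓡 hR₀ (htwo hX) hT) hinsert.veeAdd_of_insert

/-- **Lemma (Statement 1).** Let `𝓧` be a two-term maximal `𝓡[1]`-rigid subcategory.
For `R₀ ∈ 𝓡`, if there is a triangle `M⟦-1⟧ → R₀ → X → M` with `X ∈ 𝓧` such that
`g : R₀ ⟶ X` is a left `𝓧`-approximation of `R₀`, then `M ∈ 𝓧`. -/
theorem mem_of_triangle_leftApprox
    (k : Type*) [Field k] [IsAlgClosed k] [Linear k C]
    [∀ X Y : C, FiniteDimensional k (X ⟶ Y)] [IsIdempotentComplete C]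
    (𝓡 𝓧 : Set C) (h𝓡sub : IsSubcat 𝓡) (h𝓡 : IsRigidSubcat 𝓡)
    (h𝓧sub : IsSubcat 𝓧) (h𝓧max : IsTwoTermMaxRelRigid 𝓡 𝓧)
    (R₀ : C) (hR₀ : R₀ ∈ 𝓡) (M X : C) (hX : X ∈ 𝓧)
    (f : M⟦(-1:ℤ)⟧ ⟶ R₀) (g : R₀ ⟶ X) (h : X ⟶ M⟦(-1:ℤ)⟧⟦(1:ℤ)⟧)
    (htri : Triangle.mk f g h ∈ distTriang C)
    (happrox : IsLeftApprox 𝓧 g) :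
    M ∈ 𝓧 :=
  mem_of_triangle_leftApprox_general 𝓡 𝓧 h𝓡sub h𝓡 h𝓧max R₀ hR₀ M X hX f g h htri happrox
end

section
/- Let C be a 2-Calabi–Yau triangulated category which admits a cluster tilting subcategory. Then every functorially finite maximal rigid subcategory of C is cluster tilting. -/
/-!
Setting: `C` is a Hom-finite Krull–Schmidt `k`-linear triangulated category over an
algebraically closed field `k` (Krull–Schmidt is encoded as Hom-finiteness together with
idempotent completeness). Subcategories are identified with their classes of objects and
are always assumed full, closed under isomorphisms, direct sums and direct summands.
-/

open CategoryTheory CategoryTheory.Limits CategoryTheory.Pretriangulated Opposite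

universe v u

variable {C : Type u} [Category.{v} C] [Preadditive C] [HasZeroObject C] [HasShift C ℤ]
  [∀ n : ℤ, (shiftFunctor C n).Additive] [Pretriangulated C]

/-- `C` is 2-Calabi–Yau over `k`: there is a bifunctorial isomorphism
`Hom(X, Y) ≅ D Hom(Y, X⟦2⟧)`, where `D = Hom_k(-, k)`. -/
def IsTwoCalabiYau (k : Type*) [Field k] [Linear k C] : Prop :=
  ∃ η : ∀ (X Y : C), (X ⟶ Y) ≃ₗ[k] Module.Dual k (Y ⟶ X⟦(2:ℤ)⟧),
    ∀ ⦃X X' Y Y' : C⦄ (f : X' ⟶ X) (g : Y ⟶ Y') (φ : X ⟶ Y) (ψ : Y' ⟶ X'⟦(2:ℤ)⟧),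
      η X' Y' (f ≫ φ ≫ g) ψ = η X Y φ (g ≫ ψ ≫ f⟦(2:ℤ)⟧')

/-- `𝓡` is maximal rigid: rigid, and `Hom(A, B[1]) = 0` for all
`A, B ∈ 𝓡 ∨ add M` implies `M ∈ 𝓡`. -/
def IsMaxRigidSubcat (𝓡 : Set C) : Prop :=
  IsRigidSubcat 𝓡 ∧
  ∀ M : C, (∀ A ∈ veeAdd 𝓡 M, ∀ B ∈ veeAdd 𝓡 M, ∀ φ : A ⟶ B⟦(1:ℤ)⟧, φ = 0) → M ∈ 𝓡

/-- A functorially finite subcategory `𝓡` is cluster tilting if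
`𝓡 = {M : Hom(𝓡, M[1]) = 0} = {M : Hom(M, 𝓡[1]) = 0}`. -/
def IsClusterTilting (𝓡 : Set C) : Prop :=
  FunctoriallyFinite 𝓡 ∧
  (∀ M : C, M ∈ 𝓡 ↔ ∀ R ∈ 𝓡, ∀ φ : R ⟶ M⟦(1:ℤ)⟧, φ = 0) ∧
  (∀ M : C, M ∈ 𝓡 ↔ ∀ R ∈ 𝓡, ∀ φ : M ⟶ R⟦(1:ℤ)⟧, φ = 0)

/-!
In a 2-Calabi–Yau category the vanishing of `Hom(A, B⟦1⟧)` is symmetric in `A` and `B`. Let `𝓡`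
be maximal rigid and covariantly finite. The cone `R₁` of a left `𝓡`-approximation `T ⟶ R₀` of a
rigid object `T` is rigid and orthogonal to `𝓡`, hence lies in `𝓡` by maximality. So if
`Hom(𝓡, M⟦1⟧) = 0`, every map `T ⟶ M` extends to `R₀`. Resolve `M` by a cluster tilting
subcategory, `T₁ ⟶ T₀ ⟶ M ⟶ T₁⟦1⟧`. A map `M ⟶ M⟦1⟧` vanishes on `T₀` because `T₀ ⟶ M` factors
through `𝓡`, so it is the composite of `M ⟶ T₁⟦1⟧` with the shift of a map `T₁ ⟶ M`. The latter
factors through `𝓡` as well, so the composite is zero because `Hom(M, 𝓡⟦1⟧) = 0`. Thus `M` is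
rigid, and `M ∈ 𝓡` by maximality.
-/

section Subcategories

theorem IsRetractOf.map {D E : Type*} [Category D] [Category E] {Y X : D}
    (h : IsRetractOf Y X) (F : D ⥤ E) : IsRetractOf (F.obj Y) (F.obj X) := by
  obtain ⟨s, r, hsr⟩ := h
  exact ⟨F.map s, F.map r, by rw [← F.map_comp, hsr, F.map_id]⟩

variable {D E : Type*} [Category D] [Preadditive D] [Category E] [Preadditive E]

theorem IsDirectSumOf.map {S X Y : D} (h : IsDirectSumOf S X Y) (F : D ⥤ E) [F.Additive] :
    IsDirectSumOf (F.obj S) (F.obj X) (F.obj Y) := by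
  obtain ⟨i, j, p, q, hip, hjq, hiq, hjp, htotal⟩ := h
  refine ⟨F.map i, F.map j, F.map p, F.map q, ?_, ?_, ?_, ?_, ?_⟩ <;>
    simp only [← F.map_comp, ← F.map_add, hip, hjq, hiq, hjp, htotal, F.map_id, F.map_zero]

theorem IsSubcat.of_directSum_of_retract {S : Set D}
    (hsum : ∀ ⦃X Y T : D⦄, X ∈ S → Y ∈ S → IsDirectSumOf T X Y → T ∈ S)
    (hretract : ∀ ⦃X Y : D⦄, X ∈ S → IsRetractOf Y X → Y ∈ S) : IsSubcat S :=
  ⟨fun _ _ e hX => hretract hX ⟨e.inv, e.hom, e.inv_hom_id⟩, hsum, hretract⟩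

theorem IsSubcat.preimage {S : Set E} (hS : IsSubcat S) (F : D ⥤ E) [F.Additive] :
    IsSubcat (F.obj ⁻¹' S) :=
  .of_directSum_of_retract (fun _ _ _ hX hY hT => hS.2.1 hX hY (hT.map F))
    fun _ _ hX hY => hS.2.2 hX (hY.map F)

theorem isSubcat_leftOrthogonal (P : ObjectProperty D) : IsSubcat {A | P.leftOrthogonal A} := by
  refine .of_directSum_of_retract ?_ ?_
  · rintro X Y T hX hY ⟨i, j, p, q, -, -, -, -, htotal⟩ B φ hB
    calc φ = (p ≫ i + q ≫ j) ≫ φ := by rw [htotal, Category.id_comp]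
      _ = p ≫ i ≫ φ + q ≫ j ≫ φ := by simp only [Preadditive.add_comp, Category.assoc]
      _ = 0 := by rw [hX (i ≫ φ) hB, hY (j ≫ φ) hB, comp_zero, comp_zero, add_zero]
  · rintro X Y hX ⟨s, r, hsr⟩ B φ hB
    rw [← Category.id_comp φ, ← hsr, Category.assoc, hX (r ≫ φ) hB, comp_zero]

theorem isSubcat_rightOrthogonal (P : ObjectProperty D) :
    IsSubcat {B | P.rightOrthogonal B} := by
  refine .of_directSum_of_retract ?_ ?_
  · rintro X Y T hX hY ⟨i, j, p, q, -, -, -, -, htotal⟩ A φ hA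
    calc φ = φ ≫ (p ≫ i + q ≫ j) := by rw [htotal, Category.comp_id]
      _ = (φ ≫ p) ≫ i + (φ ≫ q) ≫ j := by simp only [Preadditive.comp_add, Category.assoc]
      _ = 0 := by rw [hX (φ ≫ p) hA, hY (φ ≫ q) hA, zero_comp, zero_comp, add_zero]
  · rintro X Y hX ⟨s, r, hsr⟩ A φ hA
    rw [← Category.comp_id φ, ← hsr, ← Category.assoc, hX (φ ≫ s) hA, zero_comp]

theorem veeAdd_subset_s4 {S T : Set D} {M : D} (hT : IsSubcat T) (hST : insert M S ⊆ T) :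
    veeAdd S M ⊆ T :=
  Set.sInter_subset_of_mem ⟨hT, (Set.insert_subset_iff.1 hST).symm⟩

end Subcategories

section ExtOrthogonality

variable {D : Type*} [Category D] [Preadditive D] [HasShift D ℤ]

/-- `Ext¹(A, B) = Hom(A, B⟦1⟧)` vanishes. An object `A` is rigid when `ExtVanishes A A`. -/
def ExtVanishes (A B : D) : Prop := ∀ φ : A ⟶ B⟦(1 : ℤ)⟧, φ = 0

variable (D) in
/-- The vanishing of `Hom(A, B⟦1⟧)` is symmetric in `A` and `B`, as it is in any
2-Calabi–Yau category. -/
def HasSymmetricExtVanishing : Prop := ∀ ⦃A B : D⦄, ExtVanishes A B → ExtVanishes B A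

/-- The objects `A` with `Hom(A, 𝓧⟦1⟧) = 0`. -/
def leftExtOrthogonal (𝓧 : Set D) : Set D := {A | ∀ X ∈ 𝓧, ExtVanishes A X}

/-- The objects `B` with `Hom(𝓧, B⟦1⟧) = 0`. -/
def rightExtOrthogonal (𝓧 : Set D) : Set D := {B | ∀ X ∈ 𝓧, ExtVanishes X B}

theorem HasSymmetricExtVanishing.leftExtOrthogonal_eq (hsymm : HasSymmetricExtVanishing D)
    (𝓧 : Set D) : leftExtOrthogonal 𝓧 = rightExtOrthogonal 𝓧 :=
  Set.ext fun _ => forall₂_congr fun _ _ => ⟨@hsymm _ _, @hsymm _ _⟩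

theorem isSubcat_leftExtOrthogonal (𝓧 : Set D) : IsSubcat (leftExtOrthogonal 𝓧) := by
  convert isSubcat_leftOrthogonal (· ∈ (shiftFunctor D (1 : ℤ)).obj '' 𝓧) using 1
  ext A
  constructor
  · rintro hA _ φ ⟨X, hX, rfl⟩
    exact hA X hX φ
  · exact fun hA X hX φ => hA φ ⟨X, hX, rfl⟩

theorem isSubcat_rightExtOrthogonal [(shiftFunctor D (1 : ℤ)).Additive] (𝓧 : Set D) :
    IsSubcat (rightExtOrthogonal 𝓧) := by
  convert (isSubcat_rightOrthogonal (· ∈ 𝓧)).preimage (shiftFunctor D (1 : ℤ)) using 1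
  ext B
  exact ⟨fun hB X φ hX => hB X hX φ, fun hB X hX φ => hB φ hX⟩

theorem IsTwoCalabiYau.hasSymmetricExtVanishing {k : Type*} [Field k] [Linear k D]
    (h2CY : IsTwoCalabiYau (C := D) k) : HasSymmetricExtVanishing D := by
  intro A B hAB φ
  obtain ⟨η, -⟩ := h2CY
  have : Subsingleton (A ⟶ B⟦(1 : ℤ)⟧) := subsingleton_of_forall_eq 0 hAB
  have : Subsingleton (B⟦(1 : ℤ)⟧ ⟶ A⟦(2 : ℤ)⟧) :=
    (Module.subsingleton_dual_iff k).1 (η A (B⟦(1 : ℤ)⟧)).symm.subsingleton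
  let e : A⟦(2 : ℤ)⟧ ≅ A⟦(1 : ℤ)⟧⟦(1 : ℤ)⟧ :=
    (shiftFunctorAdd' D (1 : ℤ) 1 2 one_add_one_eq_two).app A
  exact (shiftFunctor D (1 : ℤ)).map_injective ((cancel_mono e.inv).1 (Subsingleton.elim _ _))

theorem isRigidSubcat_insert {𝓡 : Set D} {M : D} (h𝓡 : IsRigidSubcat 𝓡)
    (hMl : M ∈ leftExtOrthogonal 𝓡) (hMr : M ∈ rightExtOrthogonal 𝓡)
    (hM : ExtVanishes M M) : IsRigidSubcat (insert M 𝓡) := by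
  rintro A (rfl | hA) B (rfl | hB)
  exacts [hM, hMl B hB, hMr A hA, h𝓡 A hA B hB]

theorem isRigidSubcat_veeAdd [(shiftFunctor D (1 : ℤ)).Additive] {𝓡 : Set D} {M : D}
    (h : IsRigidSubcat (insert M 𝓡)) : IsRigidSubcat (veeAdd 𝓡 M) := by
  have hleft : veeAdd 𝓡 M ⊆ leftExtOrthogonal (insert M 𝓡) :=
    veeAdd_subset_s4 (isSubcat_leftExtOrthogonal _) h
  have hright : veeAdd 𝓡 M ⊆ rightExtOrthogonal (veeAdd 𝓡 M) :=
    veeAdd_subset_s4 (isSubcat_rightExtOrthogonal _) fun B hB A hA => hleft hA B hB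
  exact fun A hA B hB => hright hB A hA

theorem IsMaxRigidSubcat.mem_of_extVanishes [(shiftFunctor D (1 : ℤ)).Additive] {𝓡 : Set D}
    {M : D} (h𝓡 : IsMaxRigidSubcat 𝓡) (hMl : M ∈ leftExtOrthogonal 𝓡)
    (hMr : M ∈ rightExtOrthogonal 𝓡) (hM : ExtVanishes M M) : M ∈ 𝓡 :=
  h𝓡.2 M (isRigidSubcat_veeAdd (isRigidSubcat_insert h𝓡.1 hMl hMr hM))

theorem IsClusterTilting.isRigidSubcat {𝓣 : Set D} (h𝓣 : IsClusterTilting 𝓣) :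
    IsRigidSubcat 𝓣 :=
  fun T hT T' hT' => (h𝓣.2.1 T').1 hT' T hT

end ExtOrthogonality

section Approximations

variable {𝓧 : Set C} {T : Triangle C}

theorem exists_eq_mor₁_comp_of_extVanishes (hT : T ∈ distTriang C) {M : C}
    (hM : ExtVanishes T.obj₃ M) (φ : T.obj₁ ⟶ M) : ∃ ψ : T.obj₂ ⟶ M, φ = T.mor₁ ≫ ψ := by
  obtain ⟨ψ, hψ, -⟩ := complete_distinguished_triangle_morphism₂ T _ hT
    (contractible_distinguished M) φ 0 ((hM _).trans zero_comp.symm)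
  exact ⟨ψ, (Category.comp_id φ).symm.trans hψ.symm⟩

theorem exists_eq_mor₃_comp_shift_map (hT : T ∈ distTriang C) {M : C}
    (φ : T.obj₃ ⟶ M⟦(1 : ℤ)⟧) (hφ : T.mor₂ ≫ φ = 0) :
    ∃ ψ : T.obj₁ ⟶ M, φ = T.mor₃ ≫ ψ⟦(1 : ℤ)⟧' := by
  obtain ⟨ψ', rfl⟩ := T.yoneda_exact₃ hT φ hφ
  obtain ⟨ψ, rfl⟩ := (shiftFunctor C (1 : ℤ)).map_surjective ψ'
  exact ⟨ψ, rfl⟩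

theorem IsLeftApprox.mor₃_comp_shift_map_eq_zero (happrox : IsLeftApprox 𝓧 T.mor₁)
    (hT : T ∈ distTriang C) {X : C} (hX : X ∈ 𝓧) (φ : T.obj₁ ⟶ X) :
    T.mor₃ ≫ φ⟦(1 : ℤ)⟧' = 0 := by
  obtain ⟨ψ, rfl⟩ := happrox X hX φ
  rw [Functor.map_comp, comp_distTriang_mor_zero₃₁_assoc _ hT, zero_comp]

theorem IsLeftApprox.obj₃_mem_leftExtOrthogonal (happrox : IsLeftApprox 𝓧 T.mor₁)
    (hT : T ∈ distTriang C) (h₂ : T.obj₂ ∈ leftExtOrthogonal 𝓧) :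
    T.obj₃ ∈ leftExtOrthogonal 𝓧 := by
  intro X hX φ
  obtain ⟨ψ, rfl⟩ := exists_eq_mor₃_comp_shift_map hT φ (h₂ X hX _)
  exact happrox.mor₃_comp_shift_map_eq_zero hT hX ψ

theorem IsRightApprox.obj₁_mem_rightExtOrthogonal (happrox : IsRightApprox 𝓧 T.mor₂)
    (hT : T ∈ distTriang C) (h₂ : T.obj₂ ∈ rightExtOrthogonal 𝓧) :
    T.obj₁ ∈ rightExtOrthogonal 𝓧 := by
  intro X hX φ
  obtain ⟨ψ, rfl⟩ := T.coyoneda_exact₁ hT φ (h₂ X hX _)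
  obtain ⟨χ, rfl⟩ := happrox X hX ψ
  rw [Category.assoc, comp_distTriang_mor_zero₂₃ _ hT, comp_zero]

theorem IsLeftApprox.extVanishes_obj₃ (happrox : IsLeftApprox 𝓧 T.mor₁)
    (hT : T ∈ distTriang C) (h₁ : ExtVanishes T.obj₁ T.obj₁) (h₂ : T.obj₂ ∈ 𝓧)
    (h₂₃ : ExtVanishes T.obj₂ T.obj₃) : ExtVanishes T.obj₃ T.obj₃ := by
  intro φ
  obtain ⟨ψ, rfl⟩ := exists_eq_mor₃_comp_shift_map hT φ (h₂₃ _)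
  obtain ⟨χ, rfl⟩ := T.coyoneda_exact₃ hT ψ (h₁ _)
  rw [Functor.map_comp, ← Category.assoc, happrox.mor₃_comp_shift_map_eq_zero hT h₂ χ, zero_comp]

end Approximations

theorem CovariantlyFinite.contravariantlyFinite {𝓡 : Set C} (hcov : CovariantlyFinite 𝓡)
    (hrigid : IsRigidSubcat 𝓡) (horth : leftExtOrthogonal 𝓡 ⊆ 𝓡) : ContravariantlyFinite 𝓡 := by
  -- If `N⟦1⟧ ≅ M`, the connecting map of the cone of a left approximation of `N` is a right
  -- approximation of `M`.
  intro M
  let N := (shiftFunctor C (1 : ℤ)).objPreimage M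
  let e : N⟦(1 : ℤ)⟧ ≅ M := (shiftFunctor C (1 : ℤ)).objObjPreimageIso M
  obtain ⟨R₀, hR₀, f, hf⟩ := hcov N
  obtain ⟨R₁, g, w, hT⟩ := distinguished_cocone_triangle f
  have hR₁ : R₁ ∈ 𝓡 := horth (hf.obj₃_mem_leftExtOrthogonal hT (hrigid R₀ hR₀))
  refine ⟨R₁, hR₁, w ≫ e.hom, fun R hR φ => ?_⟩
  obtain ⟨ψ, hψ⟩ : ∃ ψ : R ⟶ R₁, φ ≫ e.inv = ψ ≫ w :=
    Triangle.coyoneda_exact₁ _ hT _ (hrigid R hR R₀ hR₀ _)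
  exact ⟨ψ, by rw [← Category.assoc, ← hψ, Category.assoc, e.inv_hom_id, Category.comp_id]⟩

theorem ContravariantlyFinite.mem_twoTerm {𝓣 : Set C} (hcontra : ContravariantlyFinite 𝓣)
    (hrigid : IsRigidSubcat 𝓣) (horth : rightExtOrthogonal 𝓣 ⊆ 𝓣) (M : C) : M ∈ twoTerm 𝓣 := by
  obtain ⟨T₀, hT₀, b, hb⟩ := hcontra M
  obtain ⟨T₁, a, c, hT⟩ := distinguished_cocone_triangle₁ b
  have hT₁ : T₁ ∈ 𝓣 :=
    horth (hb.obj₁_mem_rightExtOrthogonal hT fun T h => hrigid T h T₀ hT₀)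
  exact ⟨T₀, hT₀, T₁⟦(1 : ℤ)⟧, ⟨T₁, hT₁, ⟨Iso.refl _⟩⟩, b, c, _, rot_of_distTriang _ hT⟩

theorem IsClusterTilting.mem_twoTerm {𝓣 : Set C} (h𝓣 : IsClusterTilting 𝓣) (M : C) :
    M ∈ twoTerm 𝓣 :=
  h𝓣.1.1.mem_twoTerm h𝓣.isRigidSubcat (fun _ => (h𝓣.2.1 _).2) M

/-- `φ` lies in the ideal `[𝓡]` of morphisms factoring through an object of `𝓡`. -/
def FactorsThroughSubcat {D : Type*} [Category D] (𝓡 : Set D) {A B : D} (φ : A ⟶ B) : Prop :=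
  ∃ R ∈ 𝓡, ∃ (a : A ⟶ R) (b : R ⟶ B), φ = a ≫ b

theorem IsMaxRigidSubcat.factorsThroughSubcat {𝓡 : Set C} (h𝓡 : IsMaxRigidSubcat 𝓡)
    (hcov : CovariantlyFinite 𝓡) (hsymm : HasSymmetricExtVanishing C) {T M : C}
    (hT : ExtVanishes T T) (hM : M ∈ rightExtOrthogonal 𝓡) (φ : T ⟶ M) :
    FactorsThroughSubcat 𝓡 φ := by
  obtain ⟨R₀, hR₀, f, hf⟩ := hcov T
  obtain ⟨R₁, g, w, hD⟩ := distinguished_cocone_triangle f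
  have hleft : R₁ ∈ leftExtOrthogonal 𝓡 := hf.obj₃_mem_leftExtOrthogonal hD (h𝓡.1 R₀ hR₀)
  have hright : R₁ ∈ rightExtOrthogonal 𝓡 := hsymm.leftExtOrthogonal_eq 𝓡 ▸ hleft
  have hrigid : ExtVanishes R₁ R₁ := hf.extVanishes_obj₃ hD hT hR₀ (hright R₀ hR₀)
  have hR₁ : R₁ ∈ 𝓡 := h𝓡.mem_of_extVanishes hleft hright hrigid
  exact ⟨R₀, hR₀, f, exists_eq_mor₁_comp_of_extVanishes hD (hM R₁ hR₁) φ⟩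

theorem extVanishes_of_mem_twoTerm {𝓣 𝓡 : Set C} {M N : C} (hM𝓣 : M ∈ twoTerm 𝓣)
    (hMfac : ∀ T ∈ 𝓣, ∀ φ : T ⟶ M, FactorsThroughSubcat 𝓡 φ)
    (hNfac : ∀ T ∈ 𝓣, ∀ φ : T ⟶ N, FactorsThroughSubcat 𝓡 φ)
    (hM : M ∈ leftExtOrthogonal 𝓡) (hN : N ∈ rightExtOrthogonal 𝓡) : ExtVanishes M N := by
  intro φ
  obtain ⟨T₀, hT₀, B, ⟨T₁, hT₁, ⟨e⟩⟩, b, c, d, hD⟩ := hM𝓣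
  have hbφ : b ≫ φ = 0 := by
    obtain ⟨R, hR, f, m, rfl⟩ := hMfac T₀ hT₀ b
    rw [Category.assoc, hN R hR (m ≫ φ), comp_zero]
  obtain ⟨ψ, hψ⟩ : ∃ ψ : B ⟶ N⟦(1 : ℤ)⟧, φ = c ≫ ψ := Triangle.yoneda_exact₂ _ hD φ hbφ
  obtain ⟨χ, hχ⟩ := (shiftFunctor C (1 : ℤ)).map_surjective (e.inv ≫ ψ)
  obtain ⟨R, hR, f, m, rfl⟩ := hNfac T₁ hT₁ χ
  calc φ = (c ≫ e.hom ≫ f⟦(1 : ℤ)⟧') ≫ m⟦(1 : ℤ)⟧' := by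
        rw [hψ, Category.assoc, Category.assoc, ← Functor.map_comp, hχ, e.hom_inv_id_assoc]
    _ = 0 := by rw [hM R hR (c ≫ e.hom ≫ f⟦(1 : ℤ)⟧'), zero_comp]

theorem IsMaxRigidSubcat.rightExtOrthogonal_subset {𝓣 𝓡 : Set C} (h𝓡 : IsMaxRigidSubcat 𝓡)
    (hcov : CovariantlyFinite 𝓡) (hsymm : HasSymmetricExtVanishing C)
    (hrigid : ∀ T ∈ 𝓣, ExtVanishes T T) (htwoTerm : ∀ M : C, M ∈ twoTerm 𝓣) :
    rightExtOrthogonal 𝓡 ⊆ 𝓡 := by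
  intro M hMr
  have hMl : M ∈ leftExtOrthogonal 𝓡 := (hsymm.leftExtOrthogonal_eq 𝓡).symm ▸ hMr
  have hfac : ∀ T ∈ 𝓣, ∀ φ : T ⟶ M, FactorsThroughSubcat 𝓡 φ :=
    fun T hT => h𝓡.factorsThroughSubcat hcov hsymm (hrigid T hT) hMr
  exact h𝓡.mem_of_extVanishes hMl hMr (extVanishes_of_mem_twoTerm (htwoTerm M) hfac hfac hMl hMr)

theorem maxRigid_isClusterTilting_of_twoCalabiYau_general {𝓣 𝓡 : Set C}
    (hsymm : HasSymmetricExtVanishing C) (hrigid : ∀ T ∈ 𝓣, ExtVanishes T T)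
    (htwoTerm : ∀ M : C, M ∈ twoTerm 𝓣) (hcov : CovariantlyFinite 𝓡)
    (h𝓡 : IsMaxRigidSubcat 𝓡) : IsClusterTilting 𝓡 := by
  have hright : rightExtOrthogonal 𝓡 ⊆ 𝓡 :=
    h𝓡.rightExtOrthogonal_subset hcov hsymm hrigid htwoTerm
  have hleft : leftExtOrthogonal 𝓡 ⊆ 𝓡 := hsymm.leftExtOrthogonal_eq 𝓡 ▸ hright
  exact ⟨⟨hcov.contravariantlyFinite h𝓡.1 hleft, hcov⟩,
    fun M => ⟨fun hM R hR => h𝓡.1 R hR M hM, @hright M⟩,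
    fun M => ⟨h𝓡.1 M, @hleft M⟩⟩

/-- **Corollary (Statement 4).** Let `C` be a 2-Calabi–Yau triangulated category admitting
a cluster tilting subcategory. Then every functorially finite maximal rigid subcategory of
`C` is cluster tilting. -/
theorem maxRigid_isClusterTilting_of_twoCalabiYau
    (k : Type*) [Field k] [IsAlgClosed k] [Linear k C]
    [∀ X Y : C, FiniteDimensional k (X ⟶ Y)] [IsIdempotentComplete C]
    (h2CY : IsTwoCalabiYau (C := C) k)
    (hct : ∃ 𝓣 : Set C, IsSubcat 𝓣 ∧ IsClusterTilting 𝓣)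
    (𝓡 : Set C) (h𝓡sub : IsSubcat 𝓡)
    (h𝓡ff : FunctoriallyFinite 𝓡) (h𝓡max : IsMaxRigidSubcat 𝓡) :
    IsClusterTilting 𝓡 := by
  obtain ⟨𝓣, -, h𝓣⟩ := hct
  exact maxRigid_isClusterTilting_of_twoCalabiYau_general h2CY.hasSymmetricExtVanishing
    (fun T hT => h𝓣.isRigidSubcat T hT T hT) h𝓣.mem_twoTerm h𝓡ff.2 h𝓡max
end
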